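/- Let p ≥ 1 be an integer and let W : ℝ → ℝ be bounded, of bounded variation, with W(x) = 0 for |x| ≥ 1, ∫_ℝ W(α) dα = 1, and ∫_ℝ W(α) α^j dα = 0 for every integer 1 ≤ j ≤ p−1. Let g : ℝ → ℂ be 2π-periodic and p times continuously differentiable. Then there exists C > 0, depending only on W, p, and the suprema sup_{x} |g^{(j)}(x)| for 0 ≤ j ≤ p, such that for every integer T ≥ 2, every b ∈ (0, π/2), and every ω ∈ [0, 2π]: |(2π/T) ∑_{s=0}^{T−1} W_b(ω − ν_s) · g(ν_s) − g(ω)| ≤ C·(b^p + 1/(T·b)). -/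

import Mathlib

/-- The periodized smoothing kernel `W_b(x) = (1/b) ∑_{k ∈ ℤ} W((x + 2kπ)/b)`. -/
noncomputable def Wper (W : ℝ → ℝ) (b x : ℝ) : ℝ :=
  (1 / b) * ∑' k : ℤ, W ((x + 2 * (k : ℝ) * Real.pi) / b)

/-!
Since `g` is periodic, summing the periodized kernel against `g` over one period of the grid is the
same as summing `W((ω - x)/b)/b` against `g(x)` over the whole grid `(2π/T)ℤ`. This is a Riemann sum
of mesh `2π/T` for the convolution integral `∫ W(u) g(ω - bu) du`. The error made on a cell is at
most the mesh times the variation of the kernel there, plus the mesh times the Lipschitz constant of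
`g` times the integral of the absolute value of the kernel there; both add up over all cells, to
`O(1/(Tb) + 1/T)`. Taylor's formula and the vanishing moments bound the difference between the
convolution and `g(ω)` by `O(b^p)`. Finally `1/T ≤ b^p + 1/(Tb)`, whether `b ≤ 1` or `b ≥ 1`.
-/

open MeasureTheory Set
open scoped NNReal

section Variation

theorem sum_eVariationOn_le_eVariationOn_biUnion {ι α E : Type*} [LinearOrder ι] [LinearOrder α]
    [PseudoEMetricSpace E] (f : α → E) {A : ι → Set α}
    (hA : ∀ i j, i < j → ∀ x ∈ A i, ∀ y ∈ A j, x ≤ y) (s : Finset ι) :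
    ∑ i ∈ s, eVariationOn f (A i) ≤ eVariationOn f (⋃ i ∈ s, A i) := by
  induction s using Finset.induction_on_max with
  | empty => simp
  | insert j s hj ih =>
    rw [Finset.sum_insert fun hmem => (hj j hmem).false, add_comm, Finset.set_biUnion_insert,
      union_comm]
    refine (add_le_add_left ih _).trans (eVariationOn.add_le_union f fun x hx y hy => ?_)
    obtain ⟨i, hi, hxi⟩ := mem_iUnion₂.1 hx
    exact hA i j (hj i hi) x hxi y hy

theorem tsum_eVariationOn_Icc_intCast_le {E : Type*} [PseudoEMetricSpace E] (f : ℝ → E) :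
    ∑' n : ℤ, eVariationOn f (Icc (n : ℝ) (n + 1)) ≤ eVariationOn f univ := by
  rw [ENNReal.tsum_eq_iSup_sum]
  refine iSup_le fun s => (sum_eVariationOn_le_eVariationOn_biUnion f ?_ s).trans
    (eVariationOn.mono f (subset_univ _))
  intro m n hmn x hx y hy
  have hmn' : (m : ℝ) + 1 ≤ n := by exact_mod_cast hmn
  exact hx.2.trans (hmn'.trans hy.1)

end Variation

section RiemannSum

variable {E : Type*} [NormedAddCommGroup E] [NormedSpace ℝ E] {f : ℝ → ℝ} {g : ℝ → E} {K : ℝ≥0}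
  {M : ℝ}

theorem norm_smul_sub_intervalIntegral_le [CompleteSpace E] {a b : ℝ} (hab : a ≤ b)
    (hf : IntervalIntegrable f volume a b) (hV : BoundedVariationOn f (Icc a b))
    (hg : LipschitzWith K g) (hM : ‖g a‖ ≤ M) :
    ‖(b - a) • f a • g a - ∫ x in a..b, f x • g x‖ ≤
      (b - a) * ((eVariationOn f (Icc a b)).toReal * M + K * ∫ x in a..b, |f x|) := by
  set V := (eVariationOn f (Icc a b)).toReal
  have hfg : IntervalIntegrable (fun x => f x • g x) volume a b :=
    hf.smul_continuousOn hg.continuous.continuousOn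
  have hmajorant : IntervalIntegrable (fun x => V * M + |f x| * (K * (b - a))) volume a b :=
    intervalIntegrable_const.add (hf.abs.mul_const _)
  have hpointwise : ∀ x ∈ Ioc a b, ‖f a • g a - f x • g x‖ ≤ V * M + |f x| * (K * (b - a)) := by
    intro x hx
    have hfV : ‖f a - f x‖ ≤ V := by
      rw [← dist_eq_norm]
      exact hV.dist_le ⟨le_rfl, hab⟩ ⟨hx.1.le, hx.2⟩
    have hgK : ‖g a - g x‖ ≤ K * (b - a) := by
      grw [hg.norm_sub_le, Real.norm_eq_abs, abs_sub_comm, abs_of_pos (sub_pos.2 hx.1), hx.2]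
    calc ‖f a • g a - f x • g x‖ = ‖(f a - f x) • g a + f x • (g a - g x)‖ := by
          rw [sub_smul, smul_sub, sub_add_sub_cancel]
      _ ≤ ‖f a - f x‖ * ‖g a‖ + |f x| * ‖g a - g x‖ := by
          grw [norm_add_le, norm_smul, norm_smul, Real.norm_eq_abs (f x)]
      _ ≤ V * M + |f x| * (K * (b - a)) := by gcongr
  rw [← intervalIntegral.integral_const, ← intervalIntegral.integral_sub (by simp) hfg]
  refine (intervalIntegral.norm_integral_le_of_norm_le hab (.of_forall hpointwise)
    hmajorant).trans_eq ?_
  rw [intervalIntegral.integral_add intervalIntegrable_const (hf.abs.mul_const _),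
    intervalIntegral.integral_const, intervalIntegral.integral_mul_const, smul_eq_mul]
  ring

theorem norm_smul_intCast_sub_intervalIntegral_le [CompleteSpace E] (hf : Integrable f)
    (hV : BoundedVariationOn f univ) (hg : LipschitzWith K g) (hM : ∀ x, ‖g x‖ ≤ M) (n : ℤ) :
    ‖f n • g n - ∫ x in (n : ℝ)..n + 1, f x • g x‖ ≤
      (eVariationOn f (Icc (n : ℝ) (n + 1))).toReal * M + K * ∫ x in (n : ℝ)..n + 1, |f x| := by
  simpa using norm_smul_sub_intervalIntegral_le (by simp : (n : ℝ) ≤ n + 1)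
    hf.intervalIntegrable (hV.mono (subset_univ _)) hg (hM n)

theorem hasSum_intervalIntegral_intCast (hg : Integrable g) :
    HasSum (fun n : ℤ => ∫ x in (n : ℝ)..n + 1, g x) (∫ x, g x) := by
  simpa only [zero_add] using hg.hasSum_intervalIntegral 0

theorem summable_eVariationOn_Icc_intCast (hV : BoundedVariationOn f univ) :
    Summable fun n : ℤ => (eVariationOn f (Icc (n : ℝ) (n + 1))).toReal :=
  ENNReal.summable_toReal (ne_top_of_le_ne_top hV (tsum_eVariationOn_Icc_intCast_le f))

theorem summable_intCast_of_boundedVariationOn (hf : Integrable f)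
    (hV : BoundedVariationOn f univ) : Summable fun n : ℤ => f n := by
  have herror : Summable fun n : ℤ => f n - ∫ x in (n : ℝ)..n + 1, f x :=
    .of_norm_bounded (summable_eVariationOn_Icc_intCast hV) fun n => by
      simpa using norm_smul_intCast_sub_intervalIntegral_le hf hV
        (LipschitzWith.const (1 : ℝ)) (fun _ => norm_one.le) n
  simpa using herror.add (hasSum_intervalIntegral_intCast hf).summable

theorem summable_smul_intCast_of_boundedVariationOn [CompleteSpace E] (hf : Integrable f)
    (hV : BoundedVariationOn f univ) (hM : ∀ x, ‖g x‖ ≤ M) : Summable fun n : ℤ => f n • g n :=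
  .of_norm_bounded ((summable_intCast_of_boundedVariationOn hf hV).abs.mul_right M) fun n => by
    grw [norm_smul, Real.norm_eq_abs, hM]

theorem norm_tsum_smul_intCast_sub_integral_le [CompleteSpace E] (hf : Integrable f)
    (hV : BoundedVariationOn f univ) (hg : LipschitzWith K g) (hM : ∀ x, ‖g x‖ ≤ M) :
    ‖∑' n : ℤ, f n • g n - ∫ x, f x • g x‖ ≤
      (eVariationOn f univ).toReal * M + K * ∫ x, |f x| := by
  have hM0 : 0 ≤ M := (norm_nonneg _).trans (hM 0)
  have hfg : Integrable fun x => f x • g x :=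
    hf.smul_bdd M hg.continuous.aestronglyMeasurable (.of_forall hM)
  have hcells := hasSum_intervalIntegral_intCast hfg
  have hvariation : ∑' n : ℤ, (eVariationOn f (Icc (n : ℝ) (n + 1))).toReal ≤
      (eVariationOn f univ).toReal := by
    rw [← ENNReal.tsum_toReal_eq fun n => hV.mono (subset_univ _)]
    exact ENNReal.toReal_mono hV (tsum_eVariationOn_Icc_intCast_le f)
  rw [← hcells.tsum_eq,
    ← (summable_smul_intCast_of_boundedVariationOn hf hV hM).tsum_sub hcells.summable]
  refine (tsum_of_norm_bounded
    (((summable_eVariationOn_Icc_intCast hV).hasSum.mul_right M).add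
      ((hasSum_intervalIntegral_intCast hf.abs).mul_left (K : ℝ)))
    (norm_smul_intCast_sub_intervalIntegral_le hf hV hg hM)).trans ?_
  gcongr

end RiemannSum

section Rescaling

variable {E : Type*} [NormedAddCommGroup E] {h b : ℝ}

theorem integrable_comp_sub_mul_div {F : ℝ → E} (hF : Integrable F) (hh : h ≠ 0) (hb : b ≠ 0)
    (ω : ℝ) : Integrable fun x => F ((ω - h * x) / b) :=
  ((hF.comp_div hb).comp_sub_left ω).comp_mul_left' hh

theorem integral_comp_sub_mul_div [NormedSpace ℝ E] (F : ℝ → E) (hh : 0 < h) (hb : 0 < b) (ω : ℝ) :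
    ∫ x, F ((ω - h * x) / b) = (b / h) • ∫ u, F u := by
  rw [Measure.integral_comp_mul_left fun y => F ((ω - y) / b),
    integral_sub_left_eq_self fun y => F (y / b), Measure.integral_comp_div, smul_smul,
    abs_of_pos hb, abs_of_pos (inv_pos.2 hh), inv_mul_eq_div]

theorem eVariationOn_comp_sub_mul_div_le (W : ℝ → ℝ) (hh : 0 ≤ h) (hb : 0 ≤ b) (ω : ℝ) :
    eVariationOn (fun x => W ((ω - h * x) / b)) univ ≤ eVariationOn W univ :=
  eVariationOn.comp_le_of_antitoneOn W (fun x => (ω - h * x) / b)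
    (fun x _ y _ hxy => by dsimp only; gcongr) (mapsTo_univ _ _)

theorem norm_smul_tsum_kernel_sub_integral_le [NormedSpace ℝ E] [CompleteSpace E] {W : ℝ → ℝ}
    {g : ℝ → E} {K : ℝ≥0} {M : ℝ} (hW : Integrable W) (hV : BoundedVariationOn W univ)
    (hg : LipschitzWith K g) (hM : ∀ x, ‖g x‖ ≤ M) (hh : 0 < h) (hb : 0 < b) (ω : ℝ) :
    ‖(h / b) • ∑' n : ℤ, W ((ω - h * n) / b) • g (h * n) - ∫ u, W u • g (ω - b * u)‖ ≤
      h / b * ((eVariationOn W univ).toReal * M) + h * (K * ∫ u, |W u|) := by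
  have hM0 : 0 ≤ M := (norm_nonneg _).trans (hM 0)
  have hvar := eVariationOn_comp_sub_mul_div_le W hh.le hb.le ω
  have hgh : LipschitzWith (K * ‖h‖₊) fun x => g (h * x) :=
    hg.comp (lipschitzWith_smul h)
  have hconv : ∫ u, W u • g (ω - b * u) =
      (h / b) • ∫ x, W ((ω - h * x) / b) • g (h * x) := by
    have hsubst := integral_comp_sub_mul_div (fun u => W u • g (ω - b * u)) hh hb ω
    simp only [mul_div_cancel₀ _ hb.ne', sub_sub_cancel] at hsubst
    rw [hsubst, smul_smul, div_mul_div_cancel₀ hb.ne', div_self hh.ne', one_smul]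
  rw [hconv, ← smul_sub, norm_smul, Real.norm_of_nonneg (by positivity)]
  grw [norm_tsum_smul_intCast_sub_integral_le (integrable_comp_sub_mul_div hW hh.ne' hb.ne' ω)
    (ne_top_of_le_ne_top hV hvar) hgh (fun x => hM _), ENNReal.toReal_mono hV hvar,
    integral_comp_sub_mul_div (fun u => |W u|) hh hb ω]
  simp only [NNReal.coe_mul, coe_nnnorm, Real.norm_of_nonneg hh.le, smul_eq_mul]
  exact le_of_eq (by field_simp)

end Rescaling

section Unfolding

theorem tsum_int_eq_sum_range_tsum {G : Type*} [AddCommGroup G] [UniformSpace G]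
    [IsUniformAddGroup G] [CompleteSpace G] [T2Space G] {F : ℤ → G} (hF : Summable F) {T : ℕ}
    (hT : T ≠ 0) : ∑' n, F n = ∑ s ∈ Finset.range T, ∑' k : ℤ, F (s - k * T) := by
  have : NeZero T := ⟨hT⟩
  let e : Fin T × ℤ ≃ ℤ :=
    ((Equiv.refl _).prodCongr (Equiv.neg ℤ)).trans
      ((Equiv.prodComm _ _).trans (Int.divModEquiv T).symm)
  have he : ∀ q, F (e q) = F (q.1 - q.2 * T) := fun q => by
    simp [e, neg_add_eq_sub]
  have hFe : Summable fun q => F (e q) := e.summable_iff.2 hF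
  rw [← e.tsum_eq F, hFe.tsum_prod, tsum_fintype, Finset.sum_range]
  simp only [he]

theorem Wper_sub_grid_eq (W : ℝ → ℝ) (b ω : ℝ) {T : ℕ} (hT : T ≠ 0) (s : ℕ) :
    Wper W b (ω - 2 * Real.pi * s / T) =
      1 / b * ∑' k : ℤ, W ((ω - 2 * Real.pi / T * ((s - k * T : ℤ) : ℝ)) / b) := by
  rw [Wper]
  congr! 5 with k
  push_cast
  field_simp
  ring

theorem smul_sum_Wper_smul_eq_smul_tsum {E : Type*} [NormedAddCommGroup E] [NormedSpace ℝ E]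
    [CompleteSpace E] {W : ℝ → ℝ} {g : ℝ → E} {M : ℝ} (hW : Integrable W)
    (hV : BoundedVariationOn W univ) (hper : Function.Periodic g (2 * Real.pi))
    (hM : ∀ x, ‖g x‖ ≤ M) {T : ℕ} (hT : T ≠ 0) {b : ℝ} (hb : 0 < b) (ω : ℝ) :
    (2 * Real.pi / T) • ∑ s ∈ Finset.range T,
        Wper W b (ω - 2 * Real.pi * s / T) • g (2 * Real.pi * s / T) =
      (2 * Real.pi / T / b) •
        ∑' n : ℤ, W ((ω - 2 * Real.pi / T * n) / b) • g (2 * Real.pi / T * n) := by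
  have hmesh : 0 < 2 * Real.pi / T := by positivity
  have hWgrid : Integrable fun x => W ((ω - 2 * Real.pi / T * x) / b) :=
    integrable_comp_sub_mul_div hW hmesh.ne' hb.ne' ω
  have hVgrid : BoundedVariationOn (fun x => W ((ω - 2 * Real.pi / T * x) / b)) univ :=
    ne_top_of_le_ne_top hV (eVariationOn_comp_sub_mul_div_le W hmesh.le hb.le ω)
  have hsum := summable_intCast_of_boundedVariationOn hWgrid hVgrid
  have hinj : ∀ s : ℕ, Function.Injective fun k : ℤ => (s : ℤ) - k * T := fun s =>
    sub_right_injective.comp (mul_left_injective₀ (by exact_mod_cast hT))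
  have hg : ∀ (s : ℕ) (k : ℤ),
      g (2 * Real.pi / T * ((s - k * T : ℤ) : ℝ)) = g (2 * Real.pi * s / T) := by
    intro s k
    rw [← hper.sub_int_mul_eq (x := 2 * Real.pi * s / T) k]
    congr 1
    push_cast
    field_simp
  rw [tsum_int_eq_sum_range_tsum
      (summable_smul_intCast_of_boundedVariationOn hWgrid hVgrid fun x => hM _) hT,
    div_eq_mul_one_div _ b, mul_smul, Finset.smul_sum (r := 1 / b)]
  congr 1
  refine Finset.sum_congr rfl fun s _ => ?_
  simp only [hg]
  rw [Wper_sub_grid_eq W b ω hT, mul_smul, ← Summable.tsum_smul_const]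
  exact hsum.comp_injective (hinj s)

end Unfolding

section Bias

variable {E : Type*} [NormedAddCommGroup E] [NormedSpace ℝ E] {W : ℝ → ℝ} {g : ℝ → E} {n : ℕ}
  {M : ℝ}

theorem integrable_mul_pow_of_le {j : ℕ} (hW : Integrable W)
    (hWn : Integrable fun u => W u * u ^ n) (hj : j ≤ n) : Integrable fun u => W u * u ^ j := by
  refine (hW.norm.add hWn.norm).mono' (hW.aestronglyMeasurable.mul (by fun_prop))
    (.of_forall fun u => ?_)
  have hpow : |u| ^ j ≤ 1 + |u| ^ n := by
    rcases le_total |u| 1 with hu | hu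
    · exact (pow_le_one₀ (abs_nonneg u) hu).trans (le_add_of_nonneg_right (by positivity))
    · exact (pow_le_pow_right₀ hu hj).trans (le_add_of_nonneg_left zero_le_one)
  simp only [Pi.add_apply, norm_mul, norm_pow, Real.norm_eq_abs]
  calc |W u| * |u| ^ j ≤ |W u| * (1 + |u| ^ n) := by gcongr
    _ = |W u| + |W u| * |u| ^ n := by ring

theorem integrable_mul_pow_of_support (hW : Integrable W)
    (hsupp : ∀ x, 1 ≤ |x| → W x = 0) (j : ℕ) : Integrable fun x => W x * x ^ j := by
  have hsub : Function.support (fun x => W x * x ^ j) ⊆ Icc (-1) 1 := fun x hx => by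
    have hx1 : |x| < 1 := by
      contrapose! hx
      simp [hsupp x hx]
    exact abs_le.1 hx1.le
  exact (integrableOn_iff_integrable_of_support_subset hsub).1
    (hW.integrableOn.mul_continuousOn (by fun_prop) isCompact_Icc)

theorem integrable_smul_sum_pow (hWj : ∀ j ≤ n, Integrable fun u => W u * u ^ j) (a : ℕ → E) :
    Integrable fun u => W u • ∑ j ∈ Finset.range (n + 1), u ^ j • a j := by
  simp only [Finset.smul_sum, smul_smul]
  exact integrable_finsetSum _ fun j hj =>
    (hWj j (Finset.mem_range_succ_iff.1 hj)).smul_const (a j)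

variable [CompleteSpace E]

theorem integral_smul_sum_pow_eq (hWj : ∀ j ≤ n, Integrable fun u => W u * u ^ j)
    (hint : ∫ u, W u = 1) (hmom : ∀ j, 1 ≤ j → j ≤ n → ∫ u, W u * u ^ j = 0) (a : ℕ → E) :
    ∫ u, W u • ∑ j ∈ Finset.range (n + 1), u ^ j • a j = a 0 := by
  simp only [Finset.smul_sum, smul_smul]
  rw [integral_finsetSum _ fun j hj =>
    (hWj j (Finset.mem_range_succ_iff.1 hj)).smul_const (a j), Finset.sum_range_succ',
    Finset.sum_eq_zero]
  · simp [integral_smul_const, hint]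
  · intro j hj
    rw [integral_smul_const, hmom (j + 1) j.succ_pos (Finset.mem_range.1 hj), zero_smul]

theorem norm_sub_sum_iteratedDeriv_le (hg : ContDiff ℝ (n + 1 : ℕ) g)
    (hM : ∀ x, ‖iteratedDeriv (n + 1) g x‖ ≤ M) (x₀ x : ℝ) :
    ‖g x - ∑ j ∈ Finset.range (n + 1),
        ((j.factorial : ℝ)⁻¹ * (x - x₀) ^ j) • iteratedDeriv j g x₀‖ ≤
      M / n.factorial * |x - x₀| ^ (n + 1) := by
  rcases eq_or_ne x₀ x with rfl | hne
  · simp [Finset.sum_range_succ']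
  have hderiv : ∀ j ≤ n + 1, ∀ t ∈ uIcc x₀ x,
      iteratedDerivWithin j g (uIcc x₀ x) t = iteratedDeriv j g t := fun j hj t ht =>
    iteratedDerivWithin_eq_iteratedDeriv (uniqueDiffOn_uIcc hne)
      (hg.of_le (by exact_mod_cast hj)).contDiffAt ht
  have hpoly : taylorWithinEval g n (uIcc x₀ x) x₀ x = ∑ j ∈ Finset.range (n + 1),
      ((j.factorial : ℝ)⁻¹ * (x - x₀) ^ j) • iteratedDeriv j g x₀ := by
    rw [taylor_within_apply]
    refine Finset.sum_congr rfl fun j hj => ?_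
    rw [hderiv j (Finset.mem_range.1 hj).le x₀ left_mem_uIcc]
  rw [← hpoly, taylor_integral_remainder hg.contDiffOn]
  refine (intervalIntegral.norm_integral_le_of_norm_le_const
    (C := |x - x₀| ^ n / n.factorial * M) fun t ht => ?_).trans_eq (by ring)
  have ht' := uIoc_subset_uIcc ht
  rw [hderiv (n + 1) le_rfl t ht', norm_smul, norm_div, norm_pow, Real.norm_eq_abs,
    Real.norm_natCast]
  gcongr ?_ ^ n / _ * ?_
  · exact abs_sub_right_of_mem_uIcc ht'
  · exact hM t

theorem norm_integral_kernel_smul_sub_le (hW : Integrable W)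
    (hWn : Integrable fun u => W u * u ^ (n + 1)) (hint : ∫ u, W u = 1)
    (hmom : ∀ j, 1 ≤ j → j ≤ n → ∫ u, W u * u ^ j = 0) (hg : ContDiff ℝ (n + 1 : ℕ) g)
    (hM : ∀ x, ‖iteratedDeriv (n + 1) g x‖ ≤ M) (ω b : ℝ) :
    ‖(∫ u, W u • g (ω - b * u)) - g ω‖ ≤
      M / n.factorial * |b| ^ (n + 1) * ∫ u, |W u * u ^ (n + 1)| := by
  have hWj : ∀ j ≤ n, Integrable fun u => W u * u ^ j := fun j hj =>
    integrable_mul_pow_of_le hW hWn (hj.trans n.le_succ)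
  set a : ℕ → E := fun j => ((j.factorial : ℝ)⁻¹ * (-b) ^ j) • iteratedDeriv j g ω with ha
  set P : ℝ → E := fun u => ∑ j ∈ Finset.range (n + 1), u ^ j • a j
  have htaylor : ∀ u, ‖g (ω - b * u) - P u‖ ≤ M / n.factorial * |b * u| ^ (n + 1) := by
    intro u
    convert! norm_sub_sum_iteratedDeriv_le hg hM ω (ω - b * u) using 3
    · refine Finset.sum_congr rfl fun j _ => ?_
      rw [ha, smul_smul, sub_sub_cancel_left, neg_mul_eq_neg_mul, mul_pow]
      congr 1
      ring
    · rw [sub_sub_cancel_left, abs_neg]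
  have hbound : ∀ u, ‖W u • (g (ω - b * u) - P u)‖ ≤
      M / n.factorial * |b| ^ (n + 1) * |W u * u ^ (n + 1)| := by
    intro u
    grw [norm_smul, htaylor u, Real.norm_eq_abs, abs_mul, abs_mul, abs_pow]
    exact le_of_eq (by ring)
  have hdominant := hWn.abs.const_mul (M / n.factorial * |b| ^ (n + 1))
  have hrem : Integrable fun u => W u • (g (ω - b * u) - P u) :=
    hdominant.mono' (hW.aestronglyMeasurable.smul
      (by have := hg.continuous; fun_prop)) (.of_forall hbound)
  have hPint : Integrable fun u => W u • P u := integrable_smul_sum_pow hWj a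
  have hsplit : (∫ u, W u • g (ω - b * u)) - g ω = ∫ u, W u • (g (ω - b * u) - P u) := by
    have hmoments : ∫ u, W u • P u = g ω := by
      simpa [ha] using integral_smul_sum_pow_eq hWj hint hmom a
    rw [sub_eq_iff_eq_add, ← hmoments, ← integral_add hrem hPint]
    simp only [← smul_add, sub_add_cancel]
  rw [hsplit, ← integral_const_mul]
  exact norm_integral_le_of_norm_le hdominant (.of_forall hbound)

end Bias

section Smoother

variable {E : Type*} [NormedAddCommGroup E] [NormedSpace ℝ E] [CompleteSpace E]

theorem norm_smoother_sub_le {W : ℝ → ℝ} {g : ℝ → E} {n : ℕ} {M₀ M : ℝ} {K : ℝ≥0}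
    (hV : BoundedVariationOn W univ) (hWn : Integrable fun u => W u * u ^ (n + 1))
    (hint : ∫ u, W u = 1) (hmom : ∀ j, 1 ≤ j → j ≤ n → ∫ u, W u * u ^ j = 0)
    (hper : Function.Periodic g (2 * Real.pi)) (hg : ContDiff ℝ (n + 1 : ℕ) g)
    (hM₀ : ∀ x, ‖g x‖ ≤ M₀) (hK : LipschitzWith K g)
    (hM : ∀ x, ‖iteratedDeriv (n + 1) g x‖ ≤ M) {T : ℕ} (hT : T ≠ 0) {b : ℝ} (hb : 0 < b)
    (ω : ℝ) :
    ‖(2 * Real.pi / T) • ∑ s ∈ Finset.range T,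
        Wper W b (ω - 2 * Real.pi * s / T) • g (2 * Real.pi * s / T) - g ω‖ ≤
      2 * Real.pi / T / b * ((eVariationOn W univ).toReal * M₀) +
        2 * Real.pi / T * (K * ∫ u, |W u|) +
        M / n.factorial * b ^ (n + 1) * ∫ u, |W u * u ^ (n + 1)| := by
  have hW : Integrable W := .of_integral_ne_zero (by simp [hint])
  have hmesh : 0 < 2 * Real.pi / T := by positivity
  have hriemann := norm_smul_tsum_kernel_sub_integral_le hW hV hK hM₀ hmesh hb ω
  have hbias := norm_integral_kernel_smul_sub_le hW hWn hint hmom hg hM ω b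
  rw [abs_of_pos hb] at hbias
  rw [smul_sum_Wper_smul_eq_smul_tsum hW hV hper hM₀ hT hb ω]
  exact (norm_sub_le_norm_sub_add_norm_sub _ _ _).trans (add_le_add hriemann hbias)

theorem one_div_natCast_le_pow_add {T : ℕ} (hT : T ≠ 0) {b : ℝ} (hb : 0 < b) (p : ℕ) :
    1 / (T : ℝ) ≤ b ^ p + 1 / (T * b) := by
  rcases le_total b 1 with hb1 | hb1
  · refine le_add_of_nonneg_of_le (by positivity) ?_
    gcongr
    exact mul_le_of_le_one_right (by positivity) hb1
  · refine le_add_of_le_of_nonneg ?_ (by positivity)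
    calc 1 / (T : ℝ) ≤ 1 := by
          rw [one_div]
          exact Nat.cast_inv_le_one T
      _ ≤ b ^ p := one_le_pow₀ hb1

theorem kernel_smoother_bias_general (p : ℕ) (hp : 1 ≤ p) (W : ℝ → ℝ)
    (hBV : BoundedVariationOn W univ) (hWp : Integrable fun x => W x * x ^ p)
    (hint : ∫ x, W x = 1) (hmom : ∀ j : ℕ, 1 ≤ j → j ≤ p - 1 → ∫ x, W x * x ^ j = 0)
    (M : ℝ) (hM : 0 ≤ M) :
    ∃ C > (0 : ℝ), ∀ g : ℝ → E, Function.Periodic g (2 * Real.pi) → ContDiff ℝ p g →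
      (∀ j ≤ p, ∀ x, ‖iteratedDeriv j g x‖ ≤ M) → ∀ T : ℕ, T ≠ 0 → ∀ b : ℝ, 0 < b → ∀ ω : ℝ,
        ‖(2 * Real.pi / T) • ∑ s ∈ Finset.range T,
            Wper W b (ω - 2 * Real.pi * s / T) • g (2 * Real.pi * s / T) - g ω‖ ≤
          C * (b ^ p + 1 / (T * b)) := by
  obtain ⟨n, rfl⟩ : ∃ n, p = n + 1 := ⟨p - 1, by omega⟩
  set V := (eVariationOn W univ).toReal
  set I := ∫ u, |W u|
  set J := ∫ u, |W u * u ^ (n + 1)|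
  have hI : 0 ≤ I := integral_nonneg fun u => abs_nonneg _
  have hJ : 0 ≤ J := integral_nonneg fun u => abs_nonneg _
  have hV : 0 ≤ V := ENNReal.toReal_nonneg
  refine ⟨2 * Real.pi * V * M + 2 * Real.pi * M * I + M / n.factorial * J + 1, by positivity, ?_⟩
  intro g hper hg hgM T hT b hb ω
  have hlip : LipschitzWith ⟨M, hM⟩ g :=
    lipschitzWith_of_nnnorm_deriv_le (hg.differentiable (by simp)) fun x => by
      simpa using! hgM 1 (by omega) x
  have hg0 : ∀ x, ‖g x‖ ≤ M := fun x => by simpa using hgM 0 (by omega) x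
  have hexplicit := norm_smoother_sub_le hBV hWp hint hmom hper hg hg0 hlip (hgM (n + 1) le_rfl)
    hT hb ω
  set R := b ^ (n + 1) + 1 / (T * b)
  have hmesh : 1 / (T : ℝ) ≤ R := one_div_natCast_le_pow_add hT hb (n + 1)
  have hvar : 1 / (T * b) ≤ R := le_add_of_nonneg_left (by positivity)
  have hpow : b ^ (n + 1) ≤ R := le_add_of_nonneg_right (by positivity)
  calc _ ≤ 2 * Real.pi / T / b * (V * M) + 2 * Real.pi / T * (M * I) +
        M / n.factorial * b ^ (n + 1) * J := hexplicit
    _ = 2 * Real.pi * V * M * (1 / (T * b)) + 2 * Real.pi * M * I * (1 / T) +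
        M / n.factorial * J * b ^ (n + 1) := by field_simp
    _ ≤ 2 * Real.pi * V * M * R + 2 * Real.pi * M * I * R + M / n.factorial * J * R + R := by
      refine le_add_of_le_of_nonneg ?_ (by positivity)
      gcongr
    _ = (2 * Real.pi * V * M + 2 * Real.pi * M * I + M / n.factorial * J + 1) * R := by ring

end Smoother

/-- **Deterministic bias bound for the discretized kernel smoother.**
Let `W` be bounded, of bounded variation, supported in `[-1,1]`, with `∫ W = 1` and
vanishing moments of orders `1, …, p-1`.  Then for every `M ≥ 0` there is `C > 0`
(depending only on `W`, `p`, and `M`) such that for every `2π`-periodic, `p`-times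
continuously differentiable `g : ℝ → ℂ` whose derivatives of order `≤ p` are bounded by
`M`, every `T ≥ 2`, `b ∈ (0, π/2)`, and `ω ∈ [0, 2π]`,
`|(2π/T) ∑_{s<T} W_b(ω - ν s) g(ν s) - g(ω)| ≤ C (b^p + 1/(T·b))`, where `ν s = 2πs/T`. -/
theorem kernel_smoother_bias (p : ℕ) (hp : 1 ≤ p) (W : ℝ → ℝ)
    (hWbd : ∃ M, ∀ x, |W x| ≤ M)
    (hBV : BoundedVariationOn W Set.univ)
    (hsupp : ∀ x : ℝ, 1 ≤ |x| → W x = 0)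
    (hint : (∫ x, W x) = 1)
    (hmom : ∀ j : ℕ, 1 ≤ j → j ≤ p - 1 → (∫ x, W x * x ^ j) = 0) :
    ∀ M : ℝ, 0 ≤ M → ∃ C > (0 : ℝ),
      ∀ g : ℝ → ℂ, Function.Periodic g (2 * Real.pi) → ContDiff ℝ (p : ℕ∞) g →
        (∀ j : ℕ, j ≤ p → ∀ x : ℝ, ‖iteratedDeriv j g x‖ ≤ M) →
      ∀ T : ℕ, 2 ≤ T → ∀ b : ℝ, 0 < b → b < Real.pi / 2 →
      ∀ ω ∈ Set.Icc (0 : ℝ) (2 * Real.pi),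
        ‖(2 * Real.pi / T : ℂ) *
            ∑ s ∈ Finset.range T,
              (Wper W b (ω - 2 * Real.pi * s / T) : ℂ) * g (2 * Real.pi * s / T) -
          g ω‖ ≤ C * (b ^ p + 1 / (T * b)) := by
  intro M hM
  have hW : Integrable W := .of_integral_ne_zero (by simp [hint])
  obtain ⟨C, hC, hbias⟩ := kernel_smoother_bias_general (E := ℂ) p hp W hBV
    (integrable_mul_pow_of_support hW hsupp p) hint hmom M hM
  refine ⟨C, hC, fun g hper hg hgM T hT b hb _ ω _ => ?_⟩
  simpa using hbias g hper hg hgM T (by omega) b hb ω
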